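/- Let N ≥ 1, α, β ≥ 1, A, B ≥ 0, 0 < T ≤ ∞, and let w₀ be a nonnegative measurable function on ℝ^N. The scalar problem (E) possesses a solution on ℝ^N × (0,T) if and only if it possesses a supersolution on ℝ^N × (0,T). -/

import Mathlib

open MeasureTheory ENNReal Filter

noncomputable section

/-- Euclidean space `ℝ^N`. -/
abbrev Euc (N : ℕ) := EuclideanSpace ℝ (Fin N)

/-- The heat semigroup applied to a (nonnegative) function `φ` on `ℝ^N`, with values in `[0,∞]`:
`[S(t)φ](x) = ∫ (4πt)^{-N/2} exp(-|x-y|²/(4t)) φ(y) dy`. -/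
noncomputable def heatS (N : ℕ) (t : ℝ) (φ : Euc N → ℝ) (x : Euc N) : ℝ≥0∞ :=
  ∫⁻ y, ENNReal.ofReal
    ((4 * Real.pi * t) ^ (-(N : ℝ) / 2) * Real.exp (-‖x - y‖ ^ 2 / (4 * t)) * φ y)

/-- The `L^∞` norm of `S(t)φ` on `ℝ^N`. -/
noncomputable def heatSup (N : ℕ) (t : ℝ) (φ : Euc N → ℝ) : ℝ≥0∞ :=
  essSup (heatS N t φ) volume

/-- The `L^{r,∞}(E)` quasinorm: for `1 < r < ∞` it is
`sup_{λ>0} λ |{x ∈ E : |f x| > λ}|^{1/r}`; for `r = 1` (resp. `r = ∞`)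
it is the usual `L¹(E)` (resp. `L^∞(E)`) norm. -/
noncomputable def wnorm (N : ℕ) (r : ℝ≥0∞) (f : Euc N → ℝ) (E : Set (Euc N)) : ℝ≥0∞ :=
  if r = 1 then ∫⁻ x in E, ENNReal.ofReal |f x|
  else if r = ⊤ then essSup (fun x => ENNReal.ofReal |f x|) (volume.restrict E)
  else ⨆ (l : ℝ) (_ : 0 < l), ENNReal.ofReal l * (volume {x ∈ E | l < |f x|}) ^ (1 / r.toReal)

/-- The uniformly local quasinorm `|||f|||_{r,ρ} = sup_x ‖f‖_{L^{r,∞}(B(x,ρ))}`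
(for `r = ∞` it is the `L^∞(ℝ^N)` norm). -/
noncomputable def ulocNorm (N : ℕ) (r : ℝ≥0∞) (ρ : ℝ) (f : Euc N → ℝ) : ℝ≥0∞ :=
  if r = ⊤ then essSup (fun x => ENNReal.ofReal |f x|) volume
  else ⨆ x : Euc N, wnorm N r f (Metric.ball x ρ)

/-- `u ∈ L^∞(τ, T-τ; L^∞(ℝ^N))` for every `τ ∈ (0, T/2)`. -/
def LocBdd (N : ℕ) (T : ℝ≥0∞) (u : Euc N → ℝ → ℝ) : Prop :=
  ∀ τ : ℝ, 0 < τ → ENNReal.ofReal (2 * τ) < T →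
    ∃ M : ℝ, ∀ t : ℝ, τ ≤ t → ENNReal.ofReal (t + τ) ≤ T →
      ∀ᵐ x ∂(volume : Measure (Euc N)), |u x t| ≤ M

/-- Regularity requirements on a pair `(u,v)`: nonnegativity, joint measurability and
uniform boundedness away from `t = 0` and `t = T`. -/
def PairRegular (N : ℕ) (T : ℝ≥0∞) (u v : Euc N → ℝ → ℝ) : Prop :=
  (∀ x t, 0 ≤ u x t) ∧ (∀ x t, 0 ≤ v x t) ∧
  Measurable (Function.uncurry u) ∧ Measurable (Function.uncurry v) ∧
  LocBdd N T u ∧ LocBdd N T v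

/-- The Duhamel identities for the system (S) `∂ₜu = Δu + v^p`, `∂ₜv = Δv + u^q` at time `t`. -/
def DuhamelSys (N : ℕ) (p q : ℝ) (u₀ v₀ : Euc N → ℝ) (u v : Euc N → ℝ → ℝ) (t : ℝ) : Prop :=
  (∀ᵐ x ∂(volume : Measure (Euc N)), ENNReal.ofReal (u x t) =
      heatS N t u₀ x + ∫⁻ s in Set.Ioo 0 t, heatS N (t - s) (fun y => v y s ^ p) x) ∧
  (∀ᵐ x ∂(volume : Measure (Euc N)), ENNReal.ofReal (v x t) =
      heatS N t v₀ x + ∫⁻ s in Set.Ioo 0 t, heatS N (t - s) (fun y => u y s ^ q) x)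

/-- The Duhamel inequalities (`≥`, with finite left-hand side) for the system (S) at time `t`. -/
def DuhamelSuperSys (N : ℕ) (p q : ℝ) (u₀ v₀ : Euc N → ℝ) (u v : Euc N → ℝ → ℝ) (t : ℝ) : Prop :=
  (∀ᵐ x ∂(volume : Measure (Euc N)),
      heatS N t u₀ x + (∫⁻ s in Set.Ioo 0 t, heatS N (t - s) (fun y => v y s ^ p) x) ≤
        ENNReal.ofReal (u x t)) ∧
  (∀ᵐ x ∂(volume : Measure (Euc N)),
      heatS N t v₀ x + (∫⁻ s in Set.Ioo 0 t, heatS N (t - s) (fun y => u y s ^ q) x) ≤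
        ENNReal.ofReal (v x t))

/-- `(u,v)` is a solution of the system (S) on `ℝ^N × (0,T)`. -/
def IsSolSys (N : ℕ) (p q : ℝ) (u₀ v₀ : Euc N → ℝ) (T : ℝ≥0∞) (u v : Euc N → ℝ → ℝ) : Prop :=
  PairRegular N T u v ∧
  ∀ t : ℝ, 0 < t → ENNReal.ofReal t < T → DuhamelSys N p q u₀ v₀ u v t

/-- `(u,v)` is a supersolution of the system (S) on `ℝ^N × (0,T)`. -/
def IsSuperSys (N : ℕ) (p q : ℝ) (u₀ v₀ : Euc N → ℝ) (T : ℝ≥0∞) (u v : Euc N → ℝ → ℝ) : Prop :=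
  PairRegular N T u v ∧
  ∀ t : ℝ, 0 < t → ENNReal.ofReal t < T → DuhamelSuperSys N p q u₀ v₀ u v t

/-- `(u,v)` is the minimal solution of the system (S) on `ℝ^N × (0,T)`. -/
def IsMinSolSys (N : ℕ) (p q : ℝ) (u₀ v₀ : Euc N → ℝ) (T : ℝ≥0∞)
    (u v : Euc N → ℝ → ℝ) : Prop :=
  IsSolSys N p q u₀ v₀ T u v ∧
  ∀ u' v' : Euc N → ℝ → ℝ, IsSolSys N p q u₀ v₀ T u' v' →
    ∀ t : ℝ, 0 < t → ENNReal.ofReal t < T →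
      (∀ᵐ x ∂(volume : Measure (Euc N)), u x t ≤ u' x t) ∧
      (∀ᵐ x ∂(volume : Measure (Euc N)), v x t ≤ v' x t)

/-- Regularity requirements on a scalar function `w`. -/
def ScalarRegular (N : ℕ) (T : ℝ≥0∞) (w : Euc N → ℝ → ℝ) : Prop :=
  (∀ x t, 0 ≤ w x t) ∧ Measurable (Function.uncurry w) ∧ LocBdd N T w

/-- The Duhamel identity for the scalar problem (E) `∂ₜw = Δw + α w^A + β w^B` at time `t`. -/
def DuhamelScalar (N : ℕ) (α β A B : ℝ) (w₀ : Euc N → ℝ) (w : Euc N → ℝ → ℝ) (t : ℝ) : Prop :=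
  ∀ᵐ x ∂(volume : Measure (Euc N)), ENNReal.ofReal (w x t) =
    heatS N t w₀ x +
      ∫⁻ s in Set.Ioo 0 t, heatS N (t - s) (fun y => α * w y s ^ A + β * w y s ^ B) x

/-- The Duhamel inequality (`≥`, with finite left-hand side) for the scalar problem (E). -/
def DuhamelSuperScalar (N : ℕ) (α β A B : ℝ) (w₀ : Euc N → ℝ) (w : Euc N → ℝ → ℝ)
    (t : ℝ) : Prop :=
  ∀ᵐ x ∂(volume : Measure (Euc N)),
    heatS N t w₀ x +
        (∫⁻ s in Set.Ioo 0 t, heatS N (t - s) (fun y => α * w y s ^ A + β * w y s ^ B) x) ≤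
      ENNReal.ofReal (w x t)

/-- `w` is a solution of the scalar problem (E) on `ℝ^N × (0,T)`. -/
def IsSolScalar (N : ℕ) (α β A B : ℝ) (w₀ : Euc N → ℝ) (T : ℝ≥0∞)
    (w : Euc N → ℝ → ℝ) : Prop :=
  ScalarRegular N T w ∧
  ∀ t : ℝ, 0 < t → ENNReal.ofReal t < T → DuhamelScalar N α β A B w₀ w t

/-- `w` is a supersolution of the scalar problem (E) on `ℝ^N × (0,T)`. -/
def IsSuperScalar (N : ℕ) (α β A B : ℝ) (w₀ : Euc N → ℝ) (T : ℝ≥0∞)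
    (w : Euc N → ℝ → ℝ) : Prop :=
  ScalarRegular N T w ∧
  ∀ t : ℝ, 0 < t → ENNReal.ofReal t < T → DuhamelSuperScalar N α β A B w₀ w t

/-- The Duhamel identities for the strongly coupled system (SC)
`∂ₜu = Δu + u^{p₁} v^{p₂}`, `∂ₜv = Δv + u^{q₁} v^{q₂}` at time `t`. -/
def DuhamelSC (N : ℕ) (p₁ p₂ q₁ q₂ : ℝ) (u₀ v₀ : Euc N → ℝ) (u v : Euc N → ℝ → ℝ)
    (t : ℝ) : Prop :=
  (∀ᵐ x ∂(volume : Measure (Euc N)), ENNReal.ofReal (u x t) =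
      heatS N t u₀ x +
        ∫⁻ s in Set.Ioo 0 t, heatS N (t - s) (fun y => u y s ^ p₁ * v y s ^ p₂) x) ∧
  (∀ᵐ x ∂(volume : Measure (Euc N)), ENNReal.ofReal (v x t) =
      heatS N t v₀ x +
        ∫⁻ s in Set.Ioo 0 t, heatS N (t - s) (fun y => u y s ^ q₁ * v y s ^ q₂) x)

/-- `(u,v)` is a solution of the strongly coupled system (SC) on `ℝ^N × (0,T)`. -/
def IsSolSC (N : ℕ) (p₁ p₂ q₁ q₂ : ℝ) (u₀ v₀ : Euc N → ℝ) (T : ℝ≥0∞)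
    (u v : Euc N → ℝ → ℝ) : Prop :=
  PairRegular N T u v ∧
  ∀ t : ℝ, 0 < t → ENNReal.ofReal t < T → DuhamelSC N p₁ p₂ q₁ q₂ u₀ v₀ u v t

/-!
Write the right-hand side of the integral equation as a map on `[0,∞]`-valued functions. As the
nonlinearity is nondecreasing and left-continuous, this map is monotone and, by monotone
convergence, commutes with suprema of increasing sequences of measurable functions. The supremum of
its Picard iterates started at `0` is therefore an exact fixed point. By induction every iterate
lies below any supersolution, almost everywhere at each time; this makes the fixed point finite
almost everywhere and locally bounded, and its real-valued version is a solution.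
-/

section MildEquation

variable {X : Type*} [MeasurableSpace X] {μ : Measure X} {K : ℝ → X → X → ℝ≥0∞}

/-- The Duhamel integral `∫₀ᵗ ∫ K(t - s, x, y) f(y, s) dμ(y) ds` of a source term `f` against a
time-dependent kernel `K`. -/
def duhamelIntegral (μ : Measure X) (K : ℝ → X → X → ℝ≥0∞) (f : X → ℝ → ℝ≥0∞) (x : X) (t : ℝ) :
    ℝ≥0∞ :=
  ∫⁻ s in Set.Ioo 0 t, ∫⁻ y, K (t - s) x y * f y s ∂μ

/-- The right-hand side of the mild (integral) equation with kernel `K`, initial datum `φ` and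
nonlinearity `Φ`. Its fixed points are the mild solutions; values in `[0,∞]` spare any
integrability assumption. -/
def mildMap (μ : Measure X) (K : ℝ → X → X → ℝ≥0∞) (φ : X → ℝ≥0∞) (Φ : ℝ≥0∞ → ℝ≥0∞)
    (u : X → ℝ → ℝ≥0∞) (x : X) (t : ℝ) : ℝ≥0∞ :=
  ∫⁻ y, K t x y * φ y ∂μ + duhamelIntegral μ K (fun y s => Φ (u y s)) x t

/-- The supremum of the Picard iterates of `mildMap` started at `0`, which is the minimal mild
solution when `Φ` is left-continuous and nondecreasing. -/
def minimalMildSolution (μ : Measure X) (K : ℝ → X → X → ℝ≥0∞) (φ : X → ℝ≥0∞)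
    (Φ : ℝ≥0∞ → ℝ≥0∞) : X → ℝ → ℝ≥0∞ :=
  ⨆ n : ℕ, (mildMap μ K φ Φ)^[n] ⊥

lemma duhamelIntegral_mono_ae {f g : X → ℝ → ℝ≥0∞} {t : ℝ}
    (hfg : ∀ s ∈ Set.Ioo 0 t, ∀ᵐ y ∂μ, f y s ≤ g y s) (x : X) :
    duhamelIntegral μ K f x t ≤ duhamelIntegral μ K g x t :=
  setLIntegral_mono' measurableSet_Ioo fun s hs =>
    lintegral_mono_ae <| (hfg s hs).mono fun _ hy => by gcongr

lemma measurable_lintegral_kernel_mul [SFinite μ] (hK : Measurable ↿K) {f : X → ℝ → ℝ≥0∞}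
    (hf : Measurable ↿f) :
    Measurable fun q : (X × ℝ) × ℝ => ∫⁻ y, K (q.1.2 - q.2) q.1.1 y * f y q.2 ∂μ := by
  have hK' : Measurable fun r : ((X × ℝ) × ℝ) × X => K (r.1.1.2 - r.1.2) r.1.1.1 r.2 :=
    hK.comp (f := fun r : ((X × ℝ) × ℝ) × X => (r.1.1.2 - r.1.2, r.1.1.1, r.2)) (by fun_prop)
  have hf' : Measurable fun r : ((X × ℝ) × ℝ) × X => f r.2 r.1.2 :=
    hf.comp (f := fun r : ((X × ℝ) × ℝ) × X => (r.2, r.1.2)) (by fun_prop)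
  exact (hK'.mul hf').lintegral_prod_right'

lemma measurable_duhamelIntegral [SFinite μ] (hK : Measurable ↿K) {f : X → ℝ → ℝ≥0∞}
    (hf : Measurable ↿f) : Measurable ↿(duhamelIntegral μ K f) := by
  let past : Set ((X × ℝ) × ℝ) := {q | q.2 ∈ Set.Ioo 0 q.1.2}
  have measurableSet_past : MeasurableSet past :=
    (measurableSet_lt measurable_const measurable_snd).inter
      (measurableSet_lt measurable_snd (measurable_snd.comp measurable_fst))
  have duhamelIntegral_eq : ↿(duhamelIntegral μ K f) = fun p : X × ℝ => ∫⁻ s, past.indicator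
      (fun q => ∫⁻ y, K (q.1.2 - q.2) q.1.1 y * f y q.2 ∂μ) (p, s) := by
    ext p
    exact (lintegral_indicator measurableSet_Ioo _).symm
  rw [duhamelIntegral_eq]
  exact ((measurable_lintegral_kernel_mul hK hf).indicator
    measurableSet_past).lintegral_prod_right'

lemma duhamelIntegral_iSup [SFinite μ] (hK : Measurable ↿K) {f : ℕ → X → ℝ → ℝ≥0∞}
    (hf : ∀ n, Measurable ↿(f n)) (hmono : Monotone f) (x : X) (t : ℝ) :
    duhamelIntegral μ K (⨆ n, f n) x t = ⨆ n, duhamelIntegral μ K (f n) x t := by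
  have space (s : ℝ) : ∫⁻ y, K (t - s) x y * (⨆ n, f n) y s ∂μ =
      ⨆ n, ∫⁻ y, K (t - s) x y * f n y s ∂μ := by
    simp only [iSup_apply, ENNReal.mul_iSup]
    refine lintegral_iSup (fun n => ?_) fun m n hmn y => by gcongr; exact hmono hmn y s
    exact (hK.comp (f := fun y : X => (t - s, x, y)) (by fun_prop)).mul
      ((hf n).comp (f := fun y : X => (y, s)) (by fun_prop))
  simp only [duhamelIntegral, space]
  refine lintegral_iSup (fun n => ?_) fun m n hmn s => lintegral_mono fun y => by
    gcongr; exact hmono hmn y s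
  exact (measurable_lintegral_kernel_mul hK (hf n)).comp
    (f := fun s : ℝ => ((x, t), s)) (by fun_prop)

variable {φ : X → ℝ≥0∞} {Φ : ℝ≥0∞ → ℝ≥0∞}

lemma mildMap_mono_ae (hΦ : Monotone Φ) {u v : X → ℝ → ℝ≥0∞} {t : ℝ}
    (huv : ∀ s ∈ Set.Ioo 0 t, ∀ᵐ y ∂μ, u y s ≤ v y s) (x : X) :
    mildMap μ K φ Φ u x t ≤ mildMap μ K φ Φ v x t :=
  add_le_add_right
    (duhamelIntegral_mono_ae (fun s hs => (huv s hs).mono fun _ hy => hΦ hy) x) _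

lemma mildMap_congr_ae (hΦ : Monotone Φ) {u v : X → ℝ → ℝ≥0∞} {t : ℝ}
    (huv : ∀ s ∈ Set.Ioo 0 t, ∀ᵐ y ∂μ, u y s = v y s) (x : X) :
    mildMap μ K φ Φ u x t = mildMap μ K φ Φ v x t :=
  le_antisymm (mildMap_mono_ae hΦ (fun s hs => (huv s hs).mono fun _ hy => hy.le) x)
    (mildMap_mono_ae hΦ (fun s hs => (huv s hs).mono fun _ hy => hy.ge) x)

lemma mildMap_monotone (hΦ : Monotone Φ) : Monotone (mildMap μ K φ Φ) :=
  fun _ _ huv x _ => mildMap_mono_ae hΦ (fun s _ => ae_of_all μ fun y => huv y s) x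

lemma measurable_mildMap [SFinite μ] (hK : Measurable ↿K) (hφ : Measurable φ) (hΦ : Measurable Φ)
    {u : X → ℝ → ℝ≥0∞} (hu : Measurable ↿u) : Measurable ↿(mildMap μ K φ Φ u) := by
  have hKφ : Measurable fun r : (X × ℝ) × X => K r.1.2 r.1.1 r.2 * φ r.2 :=
    (hK.comp (f := fun r : (X × ℝ) × X => (r.1.2, r.1.1, r.2)) (by fun_prop)).mul
      (hφ.comp measurable_snd)
  exact hKφ.lintegral_prod_right'.add (measurable_duhamelIntegral hK (hΦ.comp hu))

lemma mildMap_iSup [SFinite μ] (hK : Measurable ↿K) (hΦ : LeftOrdContinuous Φ)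
    {u : ℕ → X → ℝ → ℝ≥0∞} (hu : ∀ n, Measurable ↿(u n)) (hmono : Monotone u) :
    mildMap μ K φ Φ (⨆ n, u n) = ⨆ n, mildMap μ K φ Φ (u n) := by
  have Φ_iSup : (fun y s => Φ ((⨆ n, u n) y s)) = ⨆ n, fun y s => Φ (u n y s) := by
    ext y s
    simp only [iSup_apply, hΦ.map_iSup]
  ext x t
  rw [iSup_apply, iSup_apply]
  simp only [mildMap, Φ_iSup, ← ENNReal.add_iSup]
  rw [duhamelIntegral_iSup hK (fun n => hΦ.mono.measurable.comp (hu n))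
    fun m n hmn y s => hΦ.mono (hmono hmn y s)]

lemma measurable_iterate_mildMap [SFinite μ] (hK : Measurable ↿K) (hφ : Measurable φ)
    (hΦ : Measurable Φ) (n : ℕ) : Measurable ↿((mildMap μ K φ Φ)^[n] ⊥) := by
  induction n with
  | zero => exact measurable_const
  | succ n ih =>
    rw [Function.iterate_succ_apply']
    exact measurable_mildMap hK hφ hΦ ih

lemma measurable_minimalMildSolution [SFinite μ] (hK : Measurable ↿K) (hφ : Measurable φ)
    (hΦ : Measurable Φ) : Measurable ↿(minimalMildSolution μ K φ Φ) := by
  have iSup_uncurry : ↿(minimalMildSolution μ K φ Φ) =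
      fun p => ⨆ n : ℕ, (↿((mildMap μ K φ Φ)^[n] ⊥) : X × ℝ → ℝ≥0∞) p := by
    ext p
    simp only [minimalMildSolution, Function.HasUncurry.uncurry, iSup_apply, id]
  rw [iSup_uncurry]
  exact .iSup fun n => measurable_iterate_mildMap hK hφ hΦ n

theorem isFixedPt_minimalMildSolution [SFinite μ] (hK : Measurable ↿K) (hφ : Measurable φ)
    (hΦ : LeftOrdContinuous Φ) :
    Function.IsFixedPt (mildMap μ K φ Φ) (minimalMildSolution μ K φ Φ) := by
  have hmono : Monotone fun n : ℕ => (mildMap μ K φ Φ)^[n] ⊥ :=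
    (mildMap_monotone hΦ.mono).monotone_iterate_of_le_map bot_le
  calc mildMap μ K φ Φ (⨆ n : ℕ, (mildMap μ K φ Φ)^[n] ⊥)
      = ⨆ n : ℕ, mildMap μ K φ Φ ((mildMap μ K φ Φ)^[n] ⊥) :=
        mildMap_iSup hK hΦ (measurable_iterate_mildMap hK hφ hΦ.mono.measurable) hmono
    _ = ⨆ n : ℕ, (mildMap μ K φ Φ)^[n + 1] ⊥ := by
        simp only [Function.iterate_succ_apply']
    _ = ⨆ n : ℕ, (mildMap μ K φ Φ)^[n] ⊥ := hmono.iSup_nat_add 1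

theorem minimalMildSolution_ae_le (hΦ : Monotone Φ) {J : Set ℝ}
    (hJ : ∀ t ∈ J, Set.Ioo 0 t ⊆ J) {v : X → ℝ → ℝ≥0∞}
    (hv : ∀ t ∈ J, ∀ᵐ x ∂μ, mildMap μ K φ Φ v x t ≤ v x t) :
    ∀ t ∈ J, ∀ᵐ x ∂μ, minimalMildSolution μ K φ Φ x t ≤ v x t := by
  have iterate_le (n : ℕ) : ∀ t ∈ J, ∀ᵐ x ∂μ, (mildMap μ K φ Φ)^[n] ⊥ x t ≤ v x t := by
    induction n with
    | zero => exact fun t _ => ae_of_all μ fun x => bot_le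
    | succ n ih =>
      intro t ht
      filter_upwards [hv t ht] with x hx
      rw [Function.iterate_succ_apply']
      exact (mildMap_mono_ae hΦ (fun s hs => ih s (hJ t ht hs)) x).trans hx
  intro t ht
  filter_upwards [ae_all_iff.2 fun n => iterate_le n t ht] with x hx
  simpa only [minimalMildSolution, iSup_apply] using iSup_le hx

end MildEquation

section ScalarProblem

/-- The Gaussian heat kernel on `ℝ^N`, with values in `[0,∞]`. -/
def heatKernel (N : ℕ) (t : ℝ) (x y : Euc N) : ℝ≥0∞ :=
  ENNReal.ofReal ((4 * Real.pi * t) ^ (-(N : ℝ) / 2) * Real.exp (-‖x - y‖ ^ 2 / (4 * t)))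

/-- The nonlinearity `z ↦ α z^A + β z^B` of problem (E), extended to `[0,∞]`. -/
def sumPow (α β A B : ℝ) (z : ℝ≥0∞) : ℝ≥0∞ :=
  ENNReal.ofReal α * z ^ A + ENNReal.ofReal β * z ^ B

/-- The minimal `[0,∞]`-valued mild solution of problem (E). -/
def minimalScalarSolution (N : ℕ) (α β A B : ℝ) (w₀ : Euc N → ℝ) : Euc N → ℝ → ℝ≥0∞ :=
  minimalMildSolution volume (heatKernel N) (fun y => ENNReal.ofReal (w₀ y)) (sumPow α β A B)

variable {N : ℕ} {α β A B : ℝ} {T : ℝ≥0∞} {w₀ : Euc N → ℝ} {w : Euc N → ℝ → ℝ}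

lemma measurable_heatKernel : Measurable ↿(heatKernel N) := by
  simp only [Function.HasUncurry.uncurry, id, heatKernel]
  fun_prop

lemma heatS_eq_lintegral_heatKernel {φ : Euc N → ℝ} (hφ : ∀ y, 0 ≤ φ y) (t : ℝ) (x : Euc N) :
    heatS N t φ x = ∫⁻ y, heatKernel N t x y * ENNReal.ofReal (φ y) :=
  lintegral_congr fun y => ENNReal.ofReal_mul' (hφ y)

lemma leftOrdContinuous_sumPow (hA : 0 ≤ A) (hB : 0 ≤ B) : LeftOrdContinuous (sumPow α β A B) := by
  have hcont : Continuous (sumPow α β A B) :=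
    ((ENNReal.continuous_const_mul ENNReal.ofReal_ne_top).comp ENNReal.continuous_rpow_const).add
      ((ENNReal.continuous_const_mul ENNReal.ofReal_ne_top).comp ENNReal.continuous_rpow_const)
  exact hcont.leftOrdContinuous fun y z hyz => by
    simp only [sumPow]
    gcongr

lemma ofReal_mul_rpow_add_mul_rpow (hα : 0 ≤ α) (hβ : 0 ≤ β) (hA : 0 ≤ A) (hB : 0 ≤ B) {z : ℝ}
    (hz : 0 ≤ z) :
    ENNReal.ofReal (α * z ^ A + β * z ^ B) = sumPow α β A B (ENNReal.ofReal z) := by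
  rw [ENNReal.ofReal_add (by positivity) (by positivity), ENNReal.ofReal_mul hα,
    ENNReal.ofReal_mul hβ, sumPow, ENNReal.ofReal_rpow_of_nonneg hz hA,
    ENNReal.ofReal_rpow_of_nonneg hz hB]

lemma heatS_add_lintegral_heatS_eq_mildMap (hα : 0 ≤ α) (hβ : 0 ≤ β) (hA : 0 ≤ A) (hB : 0 ≤ B)
    (hw₀ : ∀ x, 0 ≤ w₀ x) (hw : ∀ x t, 0 ≤ w x t) (x : Euc N) (t : ℝ) :
    heatS N t w₀ x +
        (∫⁻ s in Set.Ioo 0 t, heatS N (t - s) (fun y => α * w y s ^ A + β * w y s ^ B) x) =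
      mildMap volume (heatKernel N) (fun y => ENNReal.ofReal (w₀ y)) (sumPow α β A B)
        (fun y s => ENNReal.ofReal (w y s)) x t := by
  have source_nonneg (s : ℝ) (y : Euc N) : 0 ≤ α * w y s ^ A + β * w y s ^ B := by
    have := hw y s
    positivity
  simp only [mildMap, duhamelIntegral, heatS_eq_lintegral_heatKernel hw₀,
    heatS_eq_lintegral_heatKernel (source_nonneg _),
    ofReal_mul_rpow_add_mul_rpow hα hβ hA hB (hw _ _)]

lemma LocBdd.of_ae_abs_le {v : Euc N → ℝ → ℝ} (hw : LocBdd N T w)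
    (hvw : ∀ t, 0 < t → ENNReal.ofReal t < T → ∀ᵐ x, |v x t| ≤ |w x t|) : LocBdd N T v := by
  intro τ hτ hτT
  obtain ⟨M, hM⟩ := hw τ hτ hτT
  refine ⟨M, fun t ht htT => ?_⟩
  have ht_pos : 0 < t := hτ.trans_le ht
  have ht_lt : ENNReal.ofReal t < T :=
    ((ENNReal.ofReal_lt_ofReal_iff (by linarith)).2 (by linarith)).trans_le htT
  filter_upwards [hM t ht htT, hvw t ht_pos ht_lt] with x hwM hvw using hvw.trans hwM

lemma IsSolScalar.isSuperScalar (hw : IsSolScalar N α β A B w₀ T w) :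
    IsSuperScalar N α β A B w₀ T w :=
  ⟨hw.1, fun t ht htT => (hw.2 t ht htT).mono fun _ hx => hx.ge⟩

lemma IsSuperScalar.minimalScalarSolution_ae_le (hw : IsSuperScalar N α β A B w₀ T w)
    (hα : 0 ≤ α) (hβ : 0 ≤ β) (hA : 0 ≤ A) (hB : 0 ≤ B) (hw₀ : ∀ x, 0 ≤ w₀ x) {t : ℝ}
    (ht : 0 < t) (htT : ENNReal.ofReal t < T) :
    ∀ᵐ x, minimalScalarSolution N α β A B w₀ x t ≤ ENNReal.ofReal (w x t) := by
  obtain ⟨⟨hnonneg, -, -⟩, hduhamel⟩ := hw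
  let J : Set ℝ := {s | 0 < s ∧ ENNReal.ofReal s < T}
  have Ioo_subset : ∀ s ∈ J, Set.Ioo 0 s ⊆ J := fun s hs r hr =>
    ⟨hr.1, (ENNReal.ofReal_le_ofReal hr.2.le).trans_lt hs.2⟩
  have mildMap_ae_le : ∀ s ∈ J, ∀ᵐ x, mildMap volume (heatKernel N)
      (fun y => ENNReal.ofReal (w₀ y)) (sumPow α β A B) (fun y r => ENNReal.ofReal (w y r)) x s ≤
        ENNReal.ofReal (w x s) := by
    intro s hs
    filter_upwards [hduhamel s hs.1 hs.2] with x hx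
    rwa [← heatS_add_lintegral_heatS_eq_mildMap hα hβ hA hB hw₀ hnonneg]
  exact minimalMildSolution_ae_le (leftOrdContinuous_sumPow hA hB).mono Ioo_subset mildMap_ae_le t
    ⟨ht, htT⟩

lemma scalarRegular_toReal_minimalScalarSolution (hA : 0 ≤ A) (hB : 0 ≤ B) (hw₀m : Measurable w₀)
    (hw : LocBdd N T w) (hle : ∀ t, 0 < t → ENNReal.ofReal t < T →
      ∀ᵐ x, minimalScalarSolution N α β A B w₀ x t ≤ ENNReal.ofReal (w x t)) :
    ScalarRegular N T fun x t => (minimalScalarSolution N α β A B w₀ x t).toReal := by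
  refine ⟨fun _ _ => ENNReal.toReal_nonneg, ?_, hw.of_ae_abs_le fun t ht htT => ?_⟩
  · exact (measurable_minimalMildSolution measurable_heatKernel hw₀m.ennreal_ofReal
      (leftOrdContinuous_sumPow hA hB).mono.measurable).ennreal_toReal
  · filter_upwards [hle t ht htT] with x hx
    rw [abs_of_nonneg ENNReal.toReal_nonneg]
    exact ENNReal.toReal_le_of_le_ofReal (abs_nonneg _)
      (hx.trans (ENNReal.ofReal_le_ofReal (le_abs_self _)))

lemma duhamelScalar_toReal_minimalScalarSolution (hα : 0 ≤ α) (hβ : 0 ≤ β) (hA : 0 ≤ A)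
    (hB : 0 ≤ B) (hw₀m : Measurable w₀) (hw₀ : ∀ x, 0 ≤ w₀ x) {t : ℝ}
    (hfin : ∀ s ∈ Set.Ioc 0 t, ∀ᵐ x, minimalScalarSolution N α β A B w₀ x s ≠ ⊤) (ht : 0 < t) :
    DuhamelScalar N α β A B w₀ (fun x t => (minimalScalarSolution N α β A B w₀ x t).toReal) t := by
  have ofReal_toReal : ∀ s ∈ Set.Ioc 0 t, ∀ᵐ x,
      ENNReal.ofReal (minimalScalarSolution N α β A B w₀ x s).toReal =
        minimalScalarSolution N α β A B w₀ x s :=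
    fun s hs => (hfin s hs).mono fun _ => ENNReal.ofReal_toReal
  have hΦ := leftOrdContinuous_sumPow (α := α) (β := β) hA hB
  filter_upwards [ofReal_toReal t (Set.right_mem_Ioc.2 ht)] with x hx
  rw [heatS_add_lintegral_heatS_eq_mildMap hα hβ hA hB hw₀ fun _ _ => ENNReal.toReal_nonneg,
    mildMap_congr_ae hΦ.mono fun s hs => ofReal_toReal s (Set.Ioo_subset_Ioc_self hs), hx]
  exact (congr_fun₂ (isFixedPt_minimalMildSolution measurable_heatKernel hw₀m.ennreal_ofReal hΦ)
    x t).symm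

theorem IsSuperScalar.isSolScalar_toReal_minimalScalarSolution
    (hw : IsSuperScalar N α β A B w₀ T w) (hα : 0 ≤ α) (hβ : 0 ≤ β) (hA : 0 ≤ A) (hB : 0 ≤ B)
    (hw₀m : Measurable w₀) (hw₀ : ∀ x, 0 ≤ w₀ x) :
    IsSolScalar N α β A B w₀ T fun x t => (minimalScalarSolution N α β A B w₀ x t).toReal := by
  have hle (t : ℝ) (ht : 0 < t) (htT : ENNReal.ofReal t < T) :=
    hw.minimalScalarSolution_ae_le hα hβ hA hB hw₀ ht htT
  refine ⟨scalarRegular_toReal_minimalScalarSolution hA hB hw₀m hw.1.2.2 hle,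
    fun t ht htT => duhamelScalar_toReal_minimalScalarSolution hα hβ hA hB hw₀m hw₀ ?_ ht⟩
  intro s hs
  have hsT : ENNReal.ofReal s < T := (ENNReal.ofReal_le_ofReal hs.2).trans_lt htT
  exact (hle s hs.1 hsT).mono fun _ hx => (hx.trans_lt ENNReal.ofReal_lt_top).ne

end ScalarProblem

theorem statement2_general (N : ℕ) {α β A B : ℝ} (hα : 0 ≤ α) (hβ : 0 ≤ β) (hA : 0 ≤ A)
    (hB : 0 ≤ B) (T : ℝ≥0∞) {w₀ : Euc N → ℝ} (hw₀m : Measurable w₀) (hw₀ : ∀ x, 0 ≤ w₀ x) :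
    (∃ w : Euc N → ℝ → ℝ, IsSolScalar N α β A B w₀ T w) ↔
      (∃ w : Euc N → ℝ → ℝ, IsSuperScalar N α β A B w₀ T w) :=
  ⟨fun ⟨w, hw⟩ => ⟨w, hw.isSuperScalar⟩, fun ⟨_, hw⟩ =>
    ⟨_, hw.isSolScalar_toReal_minimalScalarSolution hα hβ hA hB hw₀m hw₀⟩⟩

/-- Lemma 2.2 for the scalar problem (E): the scalar problem possesses a
solution on `ℝ^N × (0,T)` if and only if it possesses a supersolution on `ℝ^N × (0,T)`. -/
theorem statement2 (N : ℕ) (hN : 1 ≤ N) (α β A B : ℝ) (hα : 1 ≤ α) (hβ : 1 ≤ β)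
    (hA : 0 ≤ A) (hB : 0 ≤ B) (T : ℝ≥0∞) (hT : 0 < T) (w₀ : Euc N → ℝ)
    (hw₀m : Measurable w₀) (hw₀ : ∀ x, 0 ≤ w₀ x) :
    (∃ w : Euc N → ℝ → ℝ, IsSolScalar N α β A B w₀ T w) ↔
      (∃ w : Euc N → ℝ → ℝ, IsSuperScalar N α β A B w₀ T w) := by
  exact statement2_general N (zero_le_one.trans hα) (zero_le_one.trans hβ) hA hB T hw₀m hw₀
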